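/- arXiv:1103.0709 — 2 statements merged into one kernel-verified Lean document; each statement's English description precedes it below -/
import Mathlib

section
/- The four polynomials 1 + X + X^2, 1 + X^3, 1 + X^2 + X^4, and 1 + X are each irreducible in the semiring of polynomials with nonnegative integer coefficients; that is, whenever any of them is written as a product of two polynomials with nonnegative integer coefficients, one of the factors is the constant 1. -/
open Polynomial

def NNcoeff (P : Polynomial ℤ) : Prop := ∀ n, 0 ≤ P.coeff n

def IrredNN (P : Polynomial ℤ) : Prop :=
  NNcoeff P ∧ P ≠ 1 ∧
    ∀ S T : Polynomial ℤ, NNcoeff S → NNcoeff T → P = S * T → S = 1 ∨ T = 1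

/-! A polynomial with nonnegative coefficients takes nonnegative values at an integer `x > 0`. If
`P(x)` is prime, any factorization of `P` therefore has a factor with value `1` at `x`. When
`P(0) ≠ 0`, the constant term of that factor is at least `1`, which leaves no room for another term.
The four polynomials have value `2` or `3` at `1`. -/

theorem nncoeff_one : NNcoeff 1 := fun n => by
  rw [coeff_one]
  split_ifs <;> simp

theorem nncoeff_X_pow (k : ℕ) : NNcoeff (X ^ k) := fun n => by
  rw [coeff_X_pow]
  split_ifs <;> simp

namespace NNcoeff

variable {P Q : ℤ[X]} {x : ℤ}

theorem add (hP : NNcoeff P) (hQ : NNcoeff Q) : NNcoeff (P + Q) := fun n => by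
  rw [coeff_add]
  exact add_nonneg (hP n) (hQ n)

theorem divX (hP : NNcoeff P) : NNcoeff P.divX := fun n => by
  rw [coeff_divX]
  exact hP (n + 1)

theorem coeff_mul_pow_le_eval (hP : NNcoeff P) (hx : 0 ≤ x) (n : ℕ) :
    P.coeff n * x ^ n ≤ P.eval x := by
  have hterm (i : ℕ) : 0 ≤ P.coeff i * x ^ i := mul_nonneg (hP i) (pow_nonneg hx i)
  rw [eval_eq_sum, sum_def]
  by_cases hn : n ∈ P.support
  · exact Finset.single_le_sum (f := fun i => P.coeff i * x ^ i) (fun i _ => hterm i) hn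
  · rw [notMem_support_iff.mp hn, zero_mul]
    exact Finset.sum_nonneg fun i _ => hterm i

theorem eval_nonneg (hP : NNcoeff P) (hx : 0 ≤ x) : 0 ≤ P.eval x := by
  calc
    0 ≤ P.coeff 0 * x ^ 0 := mul_nonneg (hP 0) (pow_nonneg hx 0)
    _ ≤ P.eval x := hP.coeff_mul_pow_le_eval hx 0

theorem eq_zero_of_eval_eq_zero (hP : NNcoeff P) (hx : 0 < x) (hPx : P.eval x = 0) : P = 0 := by
  ext n
  have hle : P.coeff n * x ^ n ≤ 0 := hPx ▸ hP.coeff_mul_pow_le_eval hx.le n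
  exact le_antisymm (nonpos_of_mul_nonpos_left hle (pow_pos hx n)) (hP n)

theorem eq_one_of_eval_eq_one (hP : NNcoeff P) (hx : 0 < x) (hPx : P.eval x = 1)
    (hP₀ : P.coeff 0 ≠ 0) : P = 1 := by
  have heval : P.divX.eval x * x + P.coeff 0 = 1 := by
    simpa [hPx] using congrArg (eval x) P.divX_mul_X_add
  have hpos : 0 < P.coeff 0 := (hP 0).lt_of_ne' hP₀
  have hnonneg : 0 ≤ P.divX.eval x * x := mul_nonneg (hP.divX.eval_nonneg hx.le) hx.le
  have hcoeff : P.coeff 0 = 1 := by lia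
  have hdivX : P.divX = 0 := by
    refine hP.divX.eq_zero_of_eval_eq_zero hx ?_
    exact (mul_eq_zero.mp (by lia)).resolve_right hx.ne'
  rw [← P.divX_mul_X_add, hdivX, hcoeff, zero_mul, zero_add, C_1]

theorem eq_one_of_isUnit_eval (hP : NNcoeff P) (hx : 0 < x) (hPx : IsUnit (P.eval x))
    (hP₀ : P.coeff 0 ≠ 0) : P = 1 := by
  refine hP.eq_one_of_eval_eq_one hx ?_ hP₀
  have := hP.eval_nonneg hx.le
  rcases Int.isUnit_iff.mp hPx with h | h <;> lia

theorem irredNN_of_prime_eval (hP : NNcoeff P) (hx : 0 < x) (hPx : Prime (P.eval x))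
    (hP₀ : P.coeff 0 ≠ 0) : IrredNN P := by
  refine ⟨hP, ?_, ?_⟩
  · rintro rfl
    exact hPx.ne_one eval_one
  · rintro S T hS hT rfl
    rw [mul_coeff_zero] at hP₀
    refine (hPx.irreducible.isUnit_or_isUnit eval_mul).imp (fun hSx => ?_) (fun hTx => ?_)
    · exact hS.eq_one_of_isUnit_eval hx hSx (left_ne_zero_of_mul hP₀)
    · exact hT.eq_one_of_isUnit_eval hx hTx (right_ne_zero_of_mul hP₀)

theorem irredNN_one_add (hP : NNcoeff P) (hx : 0 < x) (hPx : Prime (1 + P.eval x)) :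
    IrredNN (1 + P) := by
  refine (nncoeff_one.add hP).irredNN_of_prime_eval hx ?_ ?_
  · rwa [eval_add, eval_one]
  · rw [coeff_add, coeff_one_zero]
    exact (add_pos_of_pos_of_nonneg one_pos (hP 0)).ne'

end NNcoeff

theorem irredNN_one_add_X_pow (k : ℕ) : IrredNN (1 + X ^ k) :=
  (nncoeff_X_pow k).irredNN_one_add one_pos (by simpa using Int.prime_two)

theorem irredNN_one_add_X_pow_add_X_pow (k l : ℕ) : IrredNN (1 + X ^ k + X ^ l) := by
  rw [add_assoc]
  refine ((nncoeff_X_pow k).add (nncoeff_X_pow l)).irredNN_one_add one_pos ?_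
  simpa using Int.prime_three

theorem stmt2 :
    IrredNN (1 + X + X ^ 2) ∧ IrredNN (1 + X ^ 3) ∧
    IrredNN (1 + X ^ 2 + X ^ 4) ∧ IrredNN (1 + X) := by
  refine ⟨?_, irredNN_one_add_X_pow 3, irredNN_one_add_X_pow_add_X_pow 2 4, ?_⟩
  · simpa only [pow_one] using irredNN_one_add_X_pow_add_X_pow 1 2
  · simpa only [pow_one] using irredNN_one_add_X_pow 1
end

section
/- Let P ∈ ℤ[X] with nonnegative coefficients, nonzero constant term, and P(1) = 8. Then P factors uniquely into irreducibles in the monoid of polynomials with nonnegative integer coefficients, up to ordering of the factors. -/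
open Polynomial

/-!
Work in `ℕ[X]`, whose only unit is `1`. The variable `X` is prime there, so powers of it can be
stripped off, and we may assume `P(0) ≠ 0`. A product of two or more irreducibles with value at
most `8` at `1` has a factor with value `2`, because `3 * 3 > 8`; such a factor is a binomial
`1 + X ^ a`. Induct on `P(1)`, and let `1 + X ^ a` and `1 + X ^ b` occur in two factorizations of
`P`. If `a = b`, cancel. Otherwise read `(1 + X ^ a) * B = (1 + X ^ b) * C` as an equality
`S + {0, a} = T + {0, b}` of sums of multisets of exponents, with `a < b` say. As `|T|` divides `4`,
comparing extreme elements forces `T = R + {0, a}`. Hence `1 + X ^ a` divides `C` and `1 + X ^ b`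
divides `B`, and by induction both factorizations are `1 + X ^ a`, `1 + X ^ b` and a common rest.

The divisibility matters: `(1 + X ^ 3) * (1 + X + X ^ 2) = (1 + X) * (1 + X ^ 2 + X ^ 4)` has
`|T| = 3`, and unique factorization fails for this polynomial.
-/

/-- Unique factorization of a single element: any two multisets of irreducibles with product `x`
coincide. Equality, rather than equality up to associates, is the right notion because this is
only used in monoids whose only unit is `1`. -/
def UniquelyFactors {M : Type*} [CommMonoid M] (x : M) : Prop :=
  ∀ s t : Multiset M, (∀ p ∈ s, Irreducible p) → (∀ p ∈ t, Irreducible p) →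
    s.prod = x → t.prod = x → s = t

section UniquelyFactors

variable {M : Type*}

theorem eq_zero_of_isUnit_prod [CommMonoid M] {s : Multiset M} (hs : ∀ p ∈ s, Irreducible p)
    (h : IsUnit s.prod) : s = 0 :=
  Multiset.eq_zero_of_forall_notMem fun p hp =>
    (hs p hp).not_isUnit (isUnit_of_dvd_unit (Multiset.dvd_prod hp) h)

theorem UniquelyFactors.of_isUnit [CommMonoid M] {x : M} (hx : IsUnit x) : UniquelyFactors x :=
  fun s t hs ht hsx htx => by
    rw [eq_zero_of_isUnit_prod hs (hsx ▸ hx), eq_zero_of_isUnit_prod ht (htx ▸ hx)]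

theorem eq_singleton_of_irreducible_prod [CommMonoid M] {s : Multiset M}
    (hs : ∀ p ∈ s, Irreducible p) (h : Irreducible s.prod) : s = {s.prod} := by
  obtain rfl | ⟨p, hp⟩ := s.empty_or_exists_mem
  · simp at h
  obtain ⟨r, rfl⟩ := Multiset.exists_cons_of_mem hp
  rw [Multiset.forall_mem_cons] at hs
  have hr : IsUnit r.prod :=
    (h.isUnit_or_isUnit (Multiset.prod_cons p r)).resolve_left hs.1.not_isUnit
  simp [eq_zero_of_isUnit_prod hs.2 hr]

theorem UniquelyFactors.of_irreducible [CommMonoid M] {x : M} (hx : Irreducible x) :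
    UniquelyFactors x := fun s t hs ht hsx htx => by
  rw [eq_singleton_of_irreducible_prod hs (hsx ▸ hx),
    eq_singleton_of_irreducible_prod ht (htx ▸ hx), hsx, htx]

variable [CommMonoidWithZero M] [IsCancelMulZero M] [Subsingleton Mˣ]

theorem UniquelyFactors.prime_mul {p x : M} (hp : Prime p) (hx : UniquelyFactors x) :
    UniquelyFactors (p * x) := by
  have exists_eq_cons {s : Multiset M} (hs : ∀ q ∈ s, Irreducible q) (hsx : s.prod = p * x) :
      ∃ r, s = p ::ₘ r ∧ r.prod = x := by
    obtain ⟨q, hq, hpq⟩ := hp.exists_mem_multiset_dvd (Dvd.intro x hsx.symm)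
    obtain rfl : p = q :=
      associated_iff_eq.1 ((hp.irreducible.dvd_irreducible_iff_associated (hs q hq)).1 hpq)
    obtain ⟨r, rfl⟩ := Multiset.exists_cons_of_mem hq
    exact ⟨r, rfl, mul_left_cancel₀ hp.ne_zero (by rw [← hsx, Multiset.prod_cons])⟩
  intro s t hs ht hsx htx
  obtain ⟨s, rfl, hs'⟩ := exists_eq_cons hs hsx
  obtain ⟨t, rfl, ht'⟩ := exists_eq_cons ht htx
  rw [Multiset.forall_mem_cons] at hs ht
  rw [hx s t hs.2 ht.2 hs' ht']

theorem UniquelyFactors.prime_pow_mul {p x : M} (hp : Prime p) (hx : UniquelyFactors x) (n : ℕ) :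
    UniquelyFactors (p ^ n * x) := by
  induction n with
  | zero => rwa [pow_zero, one_mul]
  | succ n ih => simpa only [pow_succ', mul_assoc] using ih.prime_mul hp

-- For `f ≠ g`, both sides equal `f ::ₘ g ::ₘ e` with `e` a factorization of `s.prod / g`.
theorem cons_eq_cons_of_uniquelyFactors [WfDvdMonoid M] {f g : M} {s t : Multiset M}
    (hs : ∀ p ∈ f ::ₘ s, Irreducible p) (ht : ∀ p ∈ g ::ₘ t, Irreducible p)
    (hus : UniquelyFactors s.prod) (hut : UniquelyFactors t.prod)
    (hst : (f ::ₘ s).prod = (g ::ₘ t).prod) (hdvd : f ≠ g → g ∣ s.prod) :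
    f ::ₘ s = g ::ₘ t := by
  rw [Multiset.forall_mem_cons] at hs ht
  rw [Multiset.prod_cons, Multiset.prod_cons] at hst
  obtain rfl | hfg := eq_or_ne f g
  · rw [hus s t hs.2 ht.2 rfl (mul_left_cancel₀ hs.1.ne_zero hst).symm]
  obtain ⟨d, hd⟩ := hdvd hfg
  have hd' : t.prod = f * d :=
    mul_left_cancel₀ ht.1.ne_zero (by rw [← hst, hd, mul_left_comm])
  have hd0 : d ≠ 0 := by
    rintro rfl
    have : Nontrivial M := ⟨f, 0, hs.1.ne_zero⟩
    exact Multiset.prod_ne_zero (fun h0 => (hs.2 0 h0).ne_zero rfl) (hd.trans (mul_zero g))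
  obtain ⟨e, he, hed⟩ := WfDvdMonoid.exists_factors d hd0
  rw [associated_iff_eq] at hed
  have hs' : s = g ::ₘ e :=
    hus s _ hs.2 (Multiset.forall_mem_cons.2 ⟨ht.1, he⟩) rfl (by rw [Multiset.prod_cons, hed, hd])
  have ht' : t = f ::ₘ e :=
    hut t _ ht.2 (Multiset.forall_mem_cons.2 ⟨hs.1, he⟩) rfl (by rw [Multiset.prod_cons, hed, hd'])
  rw [hs', ht', Multiset.cons_swap]

end UniquelyFactors

/-- The sum of a multiset of naturals with `{0, a}`: if `s` lists the exponents of a polynomial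
with natural coefficients, then `addShift a s` lists those of its product with `1 + X ^ a`. -/
def addShift (a : ℕ) (s : Multiset ℕ) : Multiset ℕ := s + s.map (· + a)

theorem addShift_cons (a n : ℕ) (s : Multiset ℕ) :
    addShift a (n ::ₘ s) = n ::ₘ (n + a) ::ₘ addShift a s := by
  simp [addShift, Multiset.cons_swap n]

theorem addShift_singleton (a n : ℕ) : addShift a {n} = {n, n + a} := rfl

theorem addShift_pair (a m n : ℕ) : addShift a {m, n} = {m, n, m + a, n + a} := rfl

theorem mem_addShift {a n : ℕ} {s : Multiset ℕ} :
    n ∈ addShift a s ↔ n ∈ s ∨ ∃ k ∈ s, k + a = n := by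
  simp [addShift]

theorem le_of_mem_addShift {a m n : ℕ} {s : Multiset ℕ} (hm : ∀ k ∈ s, m ≤ k)
    (hn : n ∈ addShift a s) : m ≤ n := by
  obtain hn | ⟨k, hk, rfl⟩ := mem_addShift.1 hn
  exacts [hm n hn, (hm k hk).trans (Nat.le_add_right k a)]

theorem card_addShift (a : ℕ) (s : Multiset ℕ) : (addShift a s).card = 2 * s.card := by
  simp [addShift, two_mul]

theorem exists_cons_of_addShift_eq_cons {a m : ℕ} {s t : Multiset ℕ}
    (h : addShift a s = m ::ₘ t) (hm : ∀ n ∈ t, m ≤ n) :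
    ∃ r, s = m ::ₘ r ∧ t = (m + a) ::ₘ addShift a r := by
  have le_of_mem (k : ℕ) (hk : k ∈ s) : m ≤ k := by
    have hk : k ∈ m ::ₘ t := h ▸ mem_addShift.2 (.inl hk)
    obtain rfl | hk := Multiset.mem_cons.1 hk
    exacts [le_rfl, hm k hk]
  have mem : m ∈ s := by
    obtain hm | ⟨k, hk, rfl⟩ := mem_addShift.1 (h ▸ Multiset.mem_cons_self m t)
    · exact hm
    · rwa [le_antisymm (le_of_mem k hk) (Nat.le_add_right k a)]
  obtain ⟨r, rfl⟩ := Multiset.exists_cons_of_mem mem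
  rw [addShift_cons, Multiset.cons_inj_right] at h
  exact ⟨r, rfl, h.symm⟩

-- `c` is the common minimum; `c + a` lies below all of `t + b`, so it must come from `t`.
theorem exists_cons_cons_of_addShift_eq {a b : ℕ} {s t : Multiset ℕ} (hab : a < b)
    (h : addShift a s = addShift b t) (ht : t ≠ 0) :
    ∃ c u r, t = c ::ₘ (c + a) ::ₘ u ∧
      addShift a r = (c + b) ::ₘ (c + a + b) ::ₘ addShift b u := by
  obtain ⟨c, hc, hmin⟩ := Multiset.exists_min_image id ht
  obtain ⟨t, rfl⟩ := Multiset.exists_cons_of_mem hc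
  replace hmin : ∀ n ∈ t, c ≤ n := fun n hn => hmin n (Multiset.mem_cons_of_mem hn)
  rw [addShift_cons] at h
  obtain ⟨r, -, hr⟩ := exists_cons_of_addShift_eq_cons h
    (Multiset.forall_mem_cons.2 ⟨Nat.le_add_right c b, fun n => le_of_mem_addShift hmin⟩)
  have mem : c + a ∈ t := by
    have h : c + a ∈ (c + b) ::ₘ addShift b t := hr ▸ Multiset.mem_cons_self _ _
    rw [Multiset.mem_cons, mem_addShift] at h
    obtain h | h | ⟨k, hk, h⟩ := h
    · omega
    · exact h
    · have := hmin k hk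
      omega
  obtain ⟨u, rfl⟩ := Multiset.exists_cons_of_mem mem
  refine ⟨c, u, r, rfl, ?_⟩
  rw [addShift_cons, Multiset.cons_swap, Multiset.cons_inj_right] at hr
  rw [← hr, Multiset.cons_swap]

theorem exists_eq_addShift_singleton {a b : ℕ} {s t : Multiset ℕ} (hab : a < b)
    (h : addShift a s = addShift b t) (ht : t.card = 2) : ∃ d, t = addShift a {d} := by
  obtain ⟨d, u, -, rfl, -⟩ :=
    exists_cons_cons_of_addShift_eq hab h (by rintro rfl; simp at ht)
  obtain rfl : u = 0 := by simpa using ht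
  exact ⟨d, rfl⟩

theorem exists_le_eq_pair {s : Multiset ℕ} (hs : s.card = 2) : ∃ m n, m ≤ n ∧ s = {m, n} := by
  obtain ⟨m, n, rfl⟩ := Multiset.card_eq_two.1 hs
  obtain h | h := le_total m n
  exacts [⟨m, n, h, rfl⟩, ⟨n, m, h, Multiset.pair_comm m n⟩]

-- Halving the sum and comparing the greatest elements identify `u + a`, `u + a + a` and `v + b` on
-- the left; cancelling the last two leaves `u + a` in `{v, u + b}`.
theorem eq_add_of_addShift_eq {a b u v : ℕ} {s : Multiset ℕ} (hab : a < b) (huv : u ≤ v)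
    (h : addShift a s = {v, u + a + a, u + b, v + b}) : v = u + a := by
  have hs : s.card = 2 := by
    have hcard := congrArg Multiset.card h
    simp only [card_addShift, Multiset.insert_eq_cons, Multiset.card_cons,
      Multiset.card_singleton] at hcard
    omega
  obtain ⟨q, r, hqr, rfl⟩ := exists_le_eq_pair hs
  rw [addShift_pair] at h
  have hsum : q + r = u + v + b := by
    have hsum := congrArg Multiset.sum h
    simp only [Multiset.insert_eq_cons, Multiset.sum_cons, Multiset.sum_singleton] at hsum
    omega
  have hmax : r + a = u + a + a ∨ r + a = v + b := by
    have hv : v + b ∈ ({q, r, q + a, r + a} : Multiset ℕ) := by rw [h]; simp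
    have hr : r + a ∈ ({v, u + a + a, u + b, v + b} : Multiset ℕ) := by rw [← h]; simp
    simp only [Multiset.insert_eq_cons, Multiset.mem_cons, Multiset.mem_singleton] at hv hr
    omega
  obtain ⟨w, hw⟩ : ∃ w, ({u + a, w} : Multiset ℕ) = {v, u + b} := by
    obtain hr | hr := hmax
    · refine ⟨q, add_right_cancel (b := {v + b, u + a + a}) ?_⟩
      rw [hr, show r = u + a by omega, show q + a = v + b by omega] at h
      simp only [Multiset.insert_eq_cons, ← Multiset.singleton_add] at h ⊢
      convert h using 1 <;> abel
    · refine ⟨r, add_right_cancel (b := {v + b, u + a + a}) ?_⟩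
      rw [hr, show q = u + a by omega] at h
      simp only [Multiset.insert_eq_cons, ← Multiset.singleton_add] at h ⊢
      convert h using 1 <;> abel
  have hmem : u + a ∈ ({v, u + b} : Multiset ℕ) := by simp [← hw]
  simp only [Multiset.insert_eq_cons, Multiset.mem_cons, Multiset.mem_singleton] at hmem
  omega

theorem exists_eq_addShift_singleton_of_eq_cons_cons {a b c : ℕ} {s t : Multiset ℕ} (hab : a < b)
    (h : addShift a s = (c + b) ::ₘ (c + a + b) ::ₘ addShift b t)
    (ht : t.card = 2) : ∃ d, t = addShift a {d} := by
  obtain ⟨u, v, huv, rfl⟩ := exists_le_eq_pair ht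
  obtain hu | hu := le_or_gt (c + b) u
  · have hmin : ∀ n ∈ ({u, v} : Multiset ℕ), c + b ≤ n :=
      Multiset.forall_mem_cons.2 ⟨hu, by simpa using hu.trans huv⟩
    obtain ⟨r, -, hr⟩ := exists_cons_of_addShift_eq_cons h
      (Multiset.forall_mem_cons.2 ⟨by omega, fun n => le_of_mem_addShift hmin⟩)
    rw [add_right_comm, Multiset.cons_inj_right] at hr
    exact exists_eq_addShift_singleton hab hr.symm ht
  · have h' : addShift a s = u ::ₘ (c + b) ::ₘ {v, c + a + b, u + b, v + b} := by
      rw [h, addShift_pair]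
      simp only [Multiset.insert_eq_cons, ← Multiset.singleton_add]
      abel
    obtain ⟨r, -, hr⟩ := exists_cons_of_addShift_eq_cons h' (by
      simp only [Multiset.insert_eq_cons, Multiset.forall_mem_cons, Multiset.mem_singleton,
        forall_eq]
      omega)
    suffices v = u + a from ⟨u, by rw [this, addShift_singleton]⟩
    have hmem : u + a = v ∨ u + a = c + b := by
      have : u + a ∈ (c + b) ::ₘ {v, c + a + b, u + b, v + b} := hr ▸ Multiset.mem_cons_self _ _
      simp only [Multiset.insert_eq_cons, Multiset.mem_cons, Multiset.mem_singleton] at this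
      omega
    obtain hv | hb := hmem
    · exact hv.symm
    · rw [hb, Multiset.cons_inj_right, add_right_comm, ← hb] at hr
      exact eq_add_of_addShift_eq hab huv hr.symm

theorem exists_eq_addShift {a b : ℕ} {s t : Multiset ℕ} (hab : a < b)
    (h : addShift a s = addShift b t) (ht : t.card ∣ 4) : ∃ r, t = addShift a r := by
  obtain ⟨c, u, r, rfl, hr⟩ :=
    exists_cons_cons_of_addShift_eq hab h (by rintro rfl; simp at ht)
  rw [Multiset.card_cons, Multiset.card_cons] at ht
  have hu : u.card = 0 ∨ u.card = 2 := by
    have hle : u.card ≤ 2 := by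
      have := Nat.le_of_dvd (by norm_num) ht
      omega
    interval_cases u.card <;> omega
  obtain hu | hu := hu
  · rw [Multiset.card_eq_zero.1 hu]
    exact ⟨{c}, rfl⟩
  · obtain ⟨d, rfl⟩ := exists_eq_addShift_singleton_of_eq_cons_cons hab hr hu
    exact ⟨{c, d}, (addShift_cons a c {d}).symm⟩

/-- The polynomial `∑ X ^ n` over a multiset of exponents; every polynomial with natural
coefficients arises in this way from a unique multiset. -/
noncomputable def ofExponents (s : Multiset ℕ) : ℕ[X] := (s.map (X ^ ·)).sum

theorem coeff_ofExponents (s : Multiset ℕ) (n : ℕ) : (ofExponents s).coeff n = s.count n := by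
  induction s using Multiset.induction with
  | empty => simp [ofExponents]
  | cons m s ih =>
    simp only [ofExponents, Multiset.map_cons, Multiset.sum_cons, coeff_add, coeff_X_pow,
      Multiset.count_cons] at ih ⊢
    rw [ih, add_comm]

theorem ofExponents_injective : Function.Injective ofExponents := fun s t h =>
  Multiset.ext' fun n => by rw [← coeff_ofExponents, h, coeff_ofExponents]

theorem ofExponents_surjective : Function.Surjective ofExponents := fun P => by
  induction P using Polynomial.induction_on' with
  | add P Q hP hQ =>
    obtain ⟨s, rfl⟩ := hP
    obtain ⟨t, rfl⟩ := hQ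
    exact ⟨s + t, by simp [ofExponents]⟩
  | monomial n k => exact ⟨.replicate k n, by simp [ofExponents, ← C_mul_X_pow_eq_monomial]⟩

theorem eval_one_ofExponents (s : Multiset ℕ) : (ofExponents s).eval 1 = s.card := by
  rw [ofExponents, ← coe_evalRingHom, map_multiset_sum]
  simp

theorem ofExponents_addShift (a : ℕ) (s : Multiset ℕ) :
    ofExponents (addShift a s) = (1 + X ^ a) * ofExponents s := by
  simp only [ofExponents, addShift, Multiset.map_add, Multiset.map_map, Function.comp_apply,
    pow_add, Multiset.sum_add, Multiset.sum_map_mul_right]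
  ring

theorem one_add_X_pow_dvd {a b : ℕ} {P Q : ℕ[X]} (hab : a ≠ b)
    (h : (1 + X ^ a) * P = (1 + X ^ b) * Q) (hP : P.eval 1 ∣ 4) : (1 + X ^ b) ∣ P := by
  have hQ : Q.eval 1 ∣ 4 := by
    have : P.eval 1 = Q.eval 1 := by simpa using congrArg (eval 1) h
    rwa [← this]
  obtain ⟨s, rfl⟩ := ofExponents_surjective P
  obtain ⟨t, rfl⟩ := ofExponents_surjective Q
  rw [eval_one_ofExponents] at hP hQ
  have hst : addShift a s = addShift b t :=
    ofExponents_injective (by simpa only [ofExponents_addShift])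
  obtain hab | hba := lt_or_gt_of_ne hab
  · obtain ⟨r, rfl⟩ := exists_eq_addShift hab hst hQ
    have ha : (1 + X ^ a : ℕ[X]) ≠ 0 := fun h0 => by simpa using congrArg (eval 1) h0
    refine ⟨ofExponents r, mul_left_cancel₀ ha ?_⟩
    rw [h, ofExponents_addShift, mul_left_comm]
  · obtain ⟨r, rfl⟩ := exists_eq_addShift hba hst.symm hP
    exact ⟨ofExponents r, ofExponents_addShift b r⟩

theorem eval_one_pos {P : ℕ[X]} (hP : P ≠ 0) : 0 < P.eval 1 := by
  obtain ⟨s, rfl⟩ := ofExponents_surjective P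
  rw [eval_one_ofExponents, Multiset.card_pos]
  rintro rfl
  simp [ofExponents] at hP

theorem eq_one_of_eval_one_eq_one {P : ℕ[X]} (h0 : P.coeff 0 ≠ 0) (h : P.eval 1 = 1) : P = 1 := by
  obtain ⟨s, rfl⟩ := ofExponents_surjective P
  rw [eval_one_ofExponents] at h
  obtain ⟨n, rfl⟩ := Multiset.card_eq_one.1 h
  obtain rfl : 0 = n := by simpa [coeff_ofExponents, Multiset.count_singleton] using h0
  simp [ofExponents]

theorem exists_eq_one_add_X_pow {P : ℕ[X]} (h0 : P.coeff 0 ≠ 0) (h : P.eval 1 = 2) :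
    ∃ a, P = 1 + X ^ a := by
  obtain ⟨s, rfl⟩ := ofExponents_surjective P
  rw [eval_one_ofExponents] at h
  rw [coeff_ofExponents, Multiset.count_ne_zero] at h0
  obtain ⟨s, rfl⟩ := Multiset.exists_cons_of_mem h0
  obtain ⟨a, rfl⟩ := Multiset.card_eq_one.1 (by simpa using h)
  exact ⟨a, by simp [ofExponents]⟩

theorem two_le_eval_one_of_irreducible {P : ℕ[X]} (h0 : P.coeff 0 ≠ 0) (hP : Irreducible P) :
    2 ≤ P.eval 1 := by
  have hpos := eval_one_pos hP.ne_zero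
  have hne : P.eval 1 ≠ 1 := fun h => hP.ne_one (eq_one_of_eval_one_eq_one h0 h)
  omega

-- Two factors with value at least `3` at `1` would already make the product at least `9`.
theorem exists_one_add_X_pow_mem {s : Multiset ℕ[X]} (hs : ∀ p ∈ s, Irreducible p)
    (h0 : s.prod.coeff 0 ≠ 0) (h9 : s.prod.eval 1 < 9) (hunit : ¬ IsUnit s.prod)
    (hirr : ¬ Irreducible s.prod) : ∃ a, 1 + X ^ a ∈ s := by
  obtain rfl | ⟨p, hp⟩ := s.empty_or_exists_mem
  · simp at hunit
  obtain ⟨s, rfl⟩ := Multiset.exists_cons_of_mem hp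
  obtain rfl | ⟨q, hq⟩ := s.empty_or_exists_mem
  · exact absurd (hs p hp) (by simpa using hirr)
  obtain ⟨r, rfl⟩ := Multiset.exists_cons_of_mem hq
  simp only [Multiset.forall_mem_cons] at hs
  simp only [Multiset.prod_cons, mul_coeff_zero, eval_mul, mul_ne_zero_iff] at h0 h9
  obtain ⟨hp0, hq0, hr0⟩ := h0
  have hp2 := two_le_eval_one_of_irreducible hp0 hs.1
  have hq2 := two_le_eval_one_of_irreducible hq0 hs.2.1
  have hr1 : 0 < r.prod.eval 1 := eval_one_pos fun h => hr0 (by rw [h, coeff_zero])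
  have hpq : p.eval 1 = 2 ∨ q.eval 1 = 2 := by
    by_contra! h
    have hp3 : 3 ≤ p.eval 1 := by omega
    have hq3 : 3 ≤ q.eval 1 := by omega
    exact h9.not_ge (Nat.mul_le_mul hp3 (Nat.mul_le_mul hq3 hr1))
  obtain hp2 | hq2 := hpq
  · obtain ⟨a, rfl⟩ := exists_eq_one_add_X_pow hp0 hp2
    exact ⟨a, by simp⟩
  · obtain ⟨a, rfl⟩ := exists_eq_one_add_X_pow hq0 hq2
    exact ⟨a, by simp⟩

instance subsingleton_units_polynomial {R : Type*} [Semiring R] [NoZeroDivisors R]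
    [Subsingleton Rˣ] : Subsingleton R[X]ˣ :=
  subsingleton_of_forall_eq 1 fun u => Units.ext <| by
    obtain ⟨r, hr, hu⟩ := Polynomial.isUnit_iff.1 u.isUnit
    rw [← hu, isUnit_iff_eq_one.1 hr, C_1, Units.val_one]

theorem uniquelyFactors_of_coeff_zero_ne_zero {P : ℕ[X]} (h0 : P.coeff 0 ≠ 0)
    (h8 : P.eval 1 ∣ 8) : UniquelyFactors P := by
  induction hn : P.eval 1 using Nat.strong_induction_on generalizing P with
  | _ n ih =>
  subst hn
  by_cases hunit : IsUnit P
  · exact .of_isUnit hunit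
  by_cases hirr : Irreducible P
  · exact .of_irreducible hirr
  have exists_eq_cons {s : Multiset ℕ[X]} (hs : ∀ p ∈ s, Irreducible p) (hsP : s.prod = P) :
      ∃ a r, s = (1 + X ^ a) ::ₘ r ∧ r.prod.eval 1 ∣ 4 ∧ UniquelyFactors r.prod := by
    subst hsP
    have h9 : s.prod.eval 1 < 9 := Nat.lt_succ_of_le (Nat.le_of_dvd (by norm_num) h8)
    obtain ⟨a, ha⟩ := exists_one_add_X_pow_mem hs h0 h9 hunit hirr
    obtain ⟨r, rfl⟩ := Multiset.exists_cons_of_mem ha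
    have heval : ((1 + X ^ a) ::ₘ r).prod.eval 1 = 2 * r.prod.eval 1 := by
      rw [Multiset.prod_cons, eval_mul]
      simp [one_add_one_eq_two]
    have hr0 : r.prod.coeff 0 ≠ 0 := by
      rw [Multiset.prod_cons, mul_coeff_zero] at h0
      exact right_ne_zero_of_mul h0
    have hr4 : r.prod.eval 1 ∣ 4 := Nat.dvd_of_mul_dvd_mul_left two_pos (heval ▸ h8)
    have hpos : 0 < r.prod.eval 1 := eval_one_pos fun h => hr0 (by rw [h, coeff_zero])
    exact ⟨a, r, rfl, hr4, ih _ (by omega) hr0 (hr4.trans (by norm_num)) rfl⟩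
  intro s t hs ht hsP htP
  obtain ⟨a, s, rfl, hs4, hus⟩ := exists_eq_cons hs hsP
  obtain ⟨b, t, rfl, -, hut⟩ := exists_eq_cons ht htP
  refine cons_eq_cons_of_uniquelyFactors hs ht hus hut (hsP.trans htP.symm) fun hab => ?_
  rw [← htP, Multiset.prod_cons, Multiset.prod_cons] at hsP
  exact one_add_X_pow_dvd (fun h => hab (by rw [h])) hsP hs4

theorem prime_X_nat : Prime (X : ℕ[X]) :=
  ⟨X_ne_zero, not_isUnit_X, fun P Q h => by simpa [X_dvd_iff, mul_coeff_zero] using h⟩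

theorem uniquelyFactors_of_eval_one_dvd_eight {P : ℕ[X]} (h8 : P.eval 1 ∣ 8) :
    UniquelyFactors P := by
  have hP : P ≠ 0 := by
    rintro rfl
    simp at h8
  obtain ⟨n, Q, hQ, rfl⟩ := WfDvdMonoid.max_power_factor hP prime_X_nat.irreducible
  rw [X_dvd_iff] at hQ
  have h8' : Q.eval 1 ∣ 8 := by simpa using h8
  exact (uniquelyFactors_of_coeff_zero_ne_zero hQ h8').prime_pow_mul prime_X_nat n

theorem nncoeff_iff_exists_map {P : ℤ[X]} :
    NNcoeff P ↔ ∃ Q : ℕ[X], Q.map (Nat.castRingHom ℤ) = P := by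
  refine ⟨fun hP => ?_, ?_⟩
  · rw [← mem_lifts, lifts_iff_coeff_lifts]
    exact fun n => ⟨(P.coeff n).toNat, Int.toNat_of_nonneg (hP n)⟩
  · rintro ⟨Q, rfl⟩ n
    simp

theorem map_natCast_injective : Function.Injective (map (Nat.castRingHom ℤ)) :=
  map_injective _ Nat.cast_injective

theorem IrredNN.exists_irreducible_map {P : ℤ[X]} (hP : IrredNN P) :
    ∃ Q : ℕ[X], Irreducible Q ∧ Q.map (Nat.castRingHom ℤ) = P := by
  obtain ⟨hPnn, hP1, hPmul⟩ := hP
  obtain ⟨Q, rfl⟩ := nncoeff_iff_exists_map.1 hPnn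
  have isUnit_of_map {S : ℕ[X]} (hS : S.map (Nat.castRingHom ℤ) = 1) : IsUnit S := by
    rw [map_natCast_injective (hS.trans (Polynomial.map_one _).symm)]
    exact isUnit_one
  refine ⟨Q, ⟨fun hQ => hP1 ?_, fun S T hST => ?_⟩, rfl⟩
  · rw [isUnit_iff_eq_one.1 hQ, Polynomial.map_one]
  · exact (hPmul _ _ (nncoeff_iff_exists_map.2 ⟨S, rfl⟩) (nncoeff_iff_exists_map.2 ⟨T, rfl⟩)
      (by rw [hST, Polynomial.map_mul])).imp isUnit_of_map isUnit_of_map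

theorem exists_irreducible_map_eq {l : List ℤ[X]} (hl : ∀ Q ∈ l, IrredNN Q) :
    ∃ m : List ℕ[X], (∀ Q ∈ m, Irreducible Q) ∧ m.map (map (Nat.castRingHom ℤ)) = l := by
  induction l with
  | nil => exact ⟨[], by simp⟩
  | cons P l ih =>
    rw [List.forall_mem_cons] at hl
    obtain ⟨Q, hQ, rfl⟩ := hl.1.exists_irreducible_map
    obtain ⟨m, hm, rfl⟩ := ih hl.2
    exact ⟨Q :: m, List.forall_mem_cons.2 ⟨hQ, hm⟩, rfl⟩

theorem stmt12_general (P : Polynomial ℤ) (hP : ∀ n, 0 ≤ P.coeff n) (h8 : P.eval 1 ∣ 8) :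
    ∀ l l' : List (Polynomial ℤ),
      (∀ Q ∈ l, IrredNN Q) → (∀ Q ∈ l', IrredNN Q) →
      l.prod = P → l'.prod = P → l.Perm l' := by
  intro l l' hl hl' hlP hlP'
  obtain ⟨R, rfl⟩ := nncoeff_iff_exists_map.1 hP
  obtain ⟨m, hm, rfl⟩ := exists_irreducible_map_eq hl
  obtain ⟨m', hm', rfl⟩ := exists_irreducible_map_eq hl'
  have prod_eq {m : List ℕ[X]} (h : (m.map (map (Nat.castRingHom ℤ))).prod =
      R.map (Nat.castRingHom ℤ)) :
      (m : Multiset ℕ[X]).prod = R :=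
    map_natCast_injective (by rw [Multiset.prod_coe, Polynomial.map_list_prod, h])
  have hR : R.eval 1 ∣ 8 := by
    rw [eval_one_map, eq_natCast] at h8
    exact_mod_cast h8
  have hmm' : (m : Multiset ℕ[X]) = m' :=
    uniquelyFactors_of_eval_one_dvd_eight hR m m' hm hm' (prod_eq hlP) (prod_eq hlP')
  exact (Multiset.coe_eq_coe.1 hmm').map _

theorem stmt12 (P : Polynomial ℤ) (hP : ∀ n, 0 ≤ P.coeff n)
    (hc : P.coeff 0 ≠ 0) (hsum : P.eval 1 = 8) :
    ∀ l l' : List (Polynomial ℤ),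
      (∀ Q ∈ l, IrredNN Q) → (∀ Q ∈ l', IrredNN Q) →
      l.prod = P → l'.prod = P → l.Perm l' :=
  stmt12_general P hP (dvd_of_eq hsum)
end
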